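/- arXiv:1303.0374 — 3 statements merged into one kernel-verified Lean document; each statement's English description precedes it below -/
import Mathlib

section
/- Let I = [0,1] and let F : I × I → I × I be a continuous triangular map, i.e. F(x, y) = (f(x), g(x, y)) for some continuous maps f : I → I and g : I × I → I. Let M be a minimal set of F and let pr₁(M) ⊆ I denote the projection of M onto the first coordinate. Then M is nowhere dense in the subspace pr₁(M) × I of I × I (equivalently, M has empty interior in the space pr₁(M) × I with the subspace topology). -/
open Set Topology unitInterval

section MinimalSets

theorem exists_iterate_eq_of_subset_image {X : Type*} {F : X → X} {M A : Set X}
    (hAM : A ⊆ M) (h : M ⊆ F '' A) (n : ℕ) :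
    ∀ y ∈ M, ∃ x ∈ M, (∀ i < n, F^[i] x ∈ A) ∧ F^[n] x = y := by
  induction n with
  | zero => exact fun y hy => ⟨y, hy, by simp, rfl⟩
  | succ n ih =>
    intro y hy
    obtain ⟨a, ha, rfl⟩ := h hy
    obtain ⟨x, hx, hxA, rfl⟩ := ih a (hAM ha)
    refine ⟨x, hx, fun i hi => ?_, Function.iterate_succ_apply' F n x⟩
    rcases Nat.lt_succ_iff_lt_or_eq.1 hi with hi | rfl
    exacts [hxA i hi, ha]

variable {X : Type*} [TopologicalSpace X] {F : X → X} {M : Set X}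

theorem subset_of_forall_exists_initial_orbit_mem (hF : Continuous F) (hMc : IsCompact M)
    (hMcl : IsClosed M)
    (hMmin : ∀ p ∈ M, M ⊆ closure (range fun n => F^[n] p)) {A : Set X} (hA : IsClosed A)
    (h : ∀ n : ℕ, ∃ x ∈ M, ∀ i < n, F^[i] x ∈ A) : M ⊆ A := by
  have hcl : ∀ n : ℕ, IsClosed (M ∩ {x | ∀ i < n, F^[i] x ∈ A}) := fun n => by
    refine hMcl.inter ?_
    simp only [ofPred_forall]
    exact isClosed_iInter fun i => isClosed_iInter fun _ => hA.preimage (hF.iterate i)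
  obtain ⟨x, hx⟩ := IsCompact.nonempty_iInter_of_sequence_nonempty_isCompact_isClosed
    (fun n : ℕ => M ∩ {x | ∀ i < n, F^[i] x ∈ A})
    (fun n x hx => ⟨hx.1, fun i hi => hx.2 i (by omega)⟩) h
    (hMc.of_isClosed_subset (hcl 0) inter_subset_left) hcl
  rw [mem_iInter] at hx
  refine (hMmin x (hx 0).1).trans (closure_minimal ?_ hA)
  rintro _ ⟨n, rfl⟩
  exact (hx (n + 1)).2 n n.lt_succ_self

theorem subset_image_of_minimal [T2Space X] (hF : Continuous F) (hMc : IsCompact M)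
    (hMinv : MapsTo F M M)
    (hMmin : ∀ p ∈ M, M ⊆ closure (range fun n => F^[n] p)) : M ⊆ F '' M := by
  intro y hy
  refine (hMmin (F y) (hMinv hy)).trans (closure_minimal ?_ (hMc.image hF).isClosed) hy
  rintro _ ⟨n, rfl⟩
  exact ⟨F^[n] y, hMinv.iterate n hy, (Function.iterate_succ_apply' F n y).symm.trans
    (Function.iterate_succ_apply F n y)⟩

theorem subset_of_subset_iterate_image [T2Space X] (hF : Continuous F) (hMc : IsCompact M)
    (hMinv : MapsTo F M M)
    (hMmin : ∀ p ∈ M, M ⊆ closure (range fun n => F^[n] p)) (n : ℕ) :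
    ∀ {A : Set X}, IsClosed A → A ⊆ M → M ⊆ F^[n] '' A → M ⊆ A := by
  induction n with
  | zero => exact fun _ _ h => by simpa using h
  | succ n ih =>
    intro A hA hAM h
    rw [Function.iterate_succ, image_comp] at h
    have hFA : M ⊆ F '' A :=
      ih ((hMc.of_isClosed_subset hA hAM).image hF).isClosed
        ((image_mono hAM).trans hMinv.image_subset) h
    rcases M.eq_empty_or_nonempty with rfl | ⟨y, hy⟩
    · exact empty_subset _
    refine subset_of_forall_exists_initial_orbit_mem hF hMc hMc.isClosed hMmin hA fun k => ?_
    obtain ⟨x, hx, hxA, -⟩ := exists_iterate_eq_of_subset_image hAM hFA k y hy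
    exact ⟨x, hx, hxA⟩

theorem exists_open_inter_subset_of_subset_iterate_image [T2Space X] (hF : Continuous F)
    (hMc : IsCompact M) (hMinv : MapsTo F M M)
    (hMmin : ∀ p ∈ M, M ⊆ closure (range fun n => F^[n] p)) (n : ℕ) {K O : Set X}
    (hK : IsClosed K) (hKM : K ⊆ M) (hO : IsOpen O) (hne : (O ∩ M).Nonempty)
    (hOK : O ∩ M ⊆ F^[n] '' K) : ∃ U, IsOpen U ∧ (U ∩ M).Nonempty ∧ U ∩ M ⊆ K := by
  have hsurj := exists_iterate_eq_of_subset_image Subset.rfl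
    (subset_image_of_minimal hF hMc hMinv hMmin) n
  have hU : IsOpen (F^[n] ⁻¹' O) := hO.preimage (hF.iterate n)
  refine ⟨F^[n] ⁻¹' O, hU, ?_, ?_⟩
  · obtain ⟨y, hyO, hyM⟩ := hne
    obtain ⟨x, hx, -, rfl⟩ := hsurj y hyM
    exact ⟨x, hyO, hx⟩
  · have hM : M ⊆ K ∪ M \ (F^[n] ⁻¹' O) := by
      refine subset_of_subset_iterate_image hF hMc hMinv hMmin n
        (hK.union (hMc.isClosed.sdiff hU)) (union_subset hKM sdiff_subset) fun y hy => ?_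
      by_cases hyO : y ∈ O
      · exact image_mono subset_union_left (hOK ⟨hyO, hy⟩)
      · obtain ⟨x, hx, -, rfl⟩ := hsurj y hy
        exact ⟨x, Or.inr ⟨hx, hyO⟩, rfl⟩
    rintro x ⟨hxO, hxM⟩
    exact (hM hxM).resolve_right fun h => h.2 hxO

theorem exists_iterate_fiber_subset_open [T2Space X] (hF : Continuous F)
    (hMc : IsCompact M) (hMinv : MapsTo F M M)
    (hMmin : ∀ p ∈ M, M ⊆ closure (range fun n => F^[n] p)) (n : ℕ) {W : Set X}
    (hW : IsOpen W) (hne : (W ∩ M).Nonempty) :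
    ∃ w ∈ W ∩ M, ∀ x ∈ M, F^[n] x = F^[n] w → x ∈ W := by
  by_contra! h
  obtain ⟨w, hwW, hwM⟩ := hne
  refine (subset_of_subset_iterate_image hF hMc hMinv hMmin n
    (hMc.isClosed.sdiff hW) sdiff_subset (fun y hy => ?_) hwM).2 hwW
  obtain ⟨x, hx, -, rfl⟩ := exists_iterate_eq_of_subset_image Subset.rfl
    (subset_image_of_minimal hF hMc hMinv hMmin) n y hy
  by_cases hxW : x ∈ W
  · obtain ⟨x', hx', heq, hx'W⟩ := h x ⟨hxW, hx⟩
    exact ⟨x', ⟨hx', hx'W⟩, heq⟩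
  · exact ⟨x, ⟨hx, hxW⟩, rfl⟩

theorem exists_mem_open_iterate_eq [T2Space X] (hF : Continuous F)
    (hMc : IsCompact M) (hMinv : MapsTo F M M)
    (hMmin : ∀ p ∈ M, M ⊆ closure (range fun n => F^[n] p)) {W : Set X}
    (hW : IsOpen W) (hne : (W ∩ M).Nonempty) {y : X} (hy : y ∈ M) :
    ∃ n : ℕ, ∃ w ∈ W ∩ M, F^[n] w = y := by
  by_contra! h
  obtain ⟨w, hwW, hwM⟩ := hne
  refine subset_of_forall_exists_initial_orbit_mem hF hMc hMc.isClosed hMmin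
    hW.isClosed_compl (fun n => ?_) hwM hwW
  obtain ⟨x, hx, -, hxy⟩ := exists_iterate_eq_of_subset_image Subset.rfl
    (subset_image_of_minimal hF hMc hMinv hMmin) n y hy
  refine ⟨x, hx, fun i hi hiW => h (n - i) (F^[i] x) ⟨hiW, hMinv.iterate i hx⟩ ?_⟩
  rw [← Function.iterate_add_apply, Nat.sub_add_cancel hi.le, hxy]

end MinimalSets

section Triangular

variable {f : I → I} {F : I × I → I × I} {M : Set (I × I)}

theorem subset_closure_orbit_image_of_semiconj {X Y : Type*} [TopologicalSpace X]
    [TopologicalSpace Y] {F : X → X} {f : Y → Y} {π : X → Y} (hπ : Continuous π)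
    (h : Function.Semiconj π F f) {M : Set X}
    (hMmin : ∀ p ∈ M, M ⊆ closure (range fun n => F^[n] p)) :
    ∀ b ∈ π '' M, π '' M ⊆ closure (range fun n => f^[n] b) := by
  rintro _ ⟨p, hp, rfl⟩
  refine (image_mono (hMmin p hp)).trans ((image_closure_subset_closure_image hπ).trans ?_)
  refine closure_mono ?_
  rintro _ ⟨_, ⟨n, rfl⟩, rfl⟩
  exact ⟨n, ((h.iterate_right n) p).symm⟩

/-- The base points whose fibre segment over `U` lies in `M` and is collapsed to a point by
the `n`-th iterate of `F`. -/
def collapsedBase (F : I × I → I × I) (M : Set (I × I)) (n : ℕ) (U : Set I) : Set I :=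
  {b | ∀ y ∈ U, (b, y) ∈ M ∧ ∀ y' ∈ U, F^[n] (b, y) = F^[n] (b, y')}

theorem isClosed_collapsedBase (hF : Continuous F) (hM : IsClosed M) (n : ℕ) (U : Set I) :
    IsClosed (collapsedBase F M n U) := by
  have hFn := hF.iterate n
  simp only [collapsedBase, ofPred_forall, ofPred_and]
  refine isClosed_iInter fun y => isClosed_iInter fun _ => IsClosed.inter ?_ ?_
  · exact hM.preimage (by fun_prop : Continuous fun b : I => (b, y))
  · exact isClosed_iInter fun y' => isClosed_iInter fun _ =>
      isClosed_eq (by fun_prop) (by fun_prop)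

theorem not_open_inter_subset_collapsedBase (hF : Continuous F) (hMcl : IsClosed M)
    (hMinv : MapsTo F M M) (hMmin : ∀ p ∈ M, M ⊆ closure (range fun n => F^[n] p))
    (n : ℕ) {U V : Set I} (hU : IsOpen U) (hUne : U.Nonempty) (hV : IsOpen V)
    (hVne : (V ∩ Prod.fst '' M).Nonempty) :
    ¬ V ∩ Prod.fst '' M ⊆ collapsedBase F M n U := by
  intro hsub
  obtain ⟨p, q, hpq, hpqU⟩ := hU.exists_Ioo_subset hUne
  obtain ⟨r, hpr, hrq⟩ := exists_between hpq
  obtain ⟨s, hrs, hsq⟩ := exists_between hrq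
  obtain ⟨t, hpt, htr⟩ := exists_between hpr
  obtain ⟨b, hb⟩ := hVne
  have hsU : s ∈ U := hpqU ⟨hpr.trans hrs, hsq⟩
  have htU : t ∈ U := hpqU ⟨hpt, htr.trans hrq⟩
  obtain ⟨⟨c, y⟩, ⟨⟨hcV, hy⟩, hcM⟩, hw⟩ := exists_iterate_fiber_subset_open hF hMcl.isCompact
    hMinv hMmin n (hV.prod (isOpen_Ioo (a := r) (b := q)))
    ⟨(b, s), ⟨hb.1, hrs, hsq⟩, (hsub hb s hsU).1⟩
  have hc := hsub ⟨hcV, (c, y), hcM, rfl⟩ t htU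
  exact htr.not_gt (hw (c, t) hc.1 (hc.2 y (hpqU ⟨hpr.trans hy.1, hy.2⟩))).2.1

/-- Iterates of a minimal triangular map cannot fold a fibre inside the interior of `M`. -/
theorem not_fold_of_minimal (hF : Continuous F) (hsemi : Function.Semiconj Prod.fst F f)
    (hMcl : IsClosed M) (hMinv : MapsTo F M M)
    (hMmin : ∀ p ∈ M, M ⊆ closure (range fun n => F^[n] p)) (n : ℕ) {V : Set I} {p q : I}
    (hV : IsOpen V) (hVM : ∀ b ∈ V ∩ Prod.fst '' M, ∀ y ∈ Ioo p q, (b, y) ∈ M)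
    {b l s r : I} (hb : b ∈ V ∩ Prod.fst '' M) (hpl : p < l) (hls : l < s) (hsr : s < r)
    (hrq : r < q) (hl : (F^[n] (b, l)).2 < (F^[n] (b, s)).2)
    (hr : (F^[n] (b, r)).2 < (F^[n] (b, s)).2) : False := by
  have hFn := hF.iterate n
  obtain ⟨v, hv, hvs⟩ := exists_between (max_lt hl hr)
  obtain ⟨t, ht, htv⟩ := intermediate_value_Ioo hls.le
    (f := fun y => (F^[n] (b, y)).2) (by fun_prop) ⟨(le_max_left _ _).trans_lt hv, hvs⟩
  have hW : IsOpen ({x : I × I | x.1 ∈ V} ∩ {x | l < x.2} ∩ {x | x.2 < s} ∩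
      {x | (F^[n] (x.1, r)).2 < (F^[n] x).2} ∩ {x | (F^[n] x).2 < (F^[n] (x.1, s)).2}) := by
    refine (((IsOpen.inter (hV.preimage continuous_fst) ?_).inter ?_).inter ?_).inter ?_ <;>
      exact isOpen_lt (by fun_prop) (by fun_prop)
  obtain ⟨⟨c, y⟩, ⟨⟨⟨⟨⟨hcV, hly⟩, hys⟩, hry⟩, hyv⟩, hcM⟩, hw⟩ :=
    exists_iterate_fiber_subset_open hF hMcl.isCompact hMinv hMmin n hW
      ⟨(b, t), ⟨⟨⟨⟨hb.1, ht.1⟩, ht.2⟩, ((le_max_right _ _).trans_lt hv).trans_eq htv.symm⟩,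
        htv.trans_lt hvs⟩, hVM b hb t ⟨hpl.trans ht.1, ht.2.trans (hsr.trans hrq)⟩⟩
  obtain ⟨t', ht', ht'y⟩ := intermediate_value_Ioo' hsr.le
    (f := fun y => (F^[n] (c, y)).2) (by fun_prop) ⟨hry, hyv⟩
  have hfst : ∀ z, (F^[n] (c, z)).1 = f^[n] c := fun z => (hsemi.iterate_right n) (c, z)
  have hmem := hw (c, t') (hVM c ⟨hcV, (c, y), hcM, rfl⟩ t'
    ⟨(hpl.trans hls).trans ht'.1, ht'.2.trans hrq⟩)
    (Prod.ext ((hfst t').trans (hfst y).symm) ht'y)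
  exact ht'.1.not_gt hmem.1.1.2

/-- Some base point is not the image of a collapsed base point under any iterate of `f`. -/
theorem exists_forall_notMem_image_collapsedBase (hf : Continuous f) (hF : Continuous F)
    (hsemi : Function.Semiconj Prod.fst F f) (hMne : M.Nonempty)
    (hMcl : IsClosed M) (hMinv : MapsTo F M M)
    (hMmin : ∀ p ∈ M, M ⊆ closure (range fun n => F^[n] p)) :
    ∃ b ∈ Prod.fst '' M, ∀ n : ℕ, ∀ U : Set I, IsOpen U → U.Nonempty →
      b ∉ f^[n] '' (collapsedBase F M n U) := by
  have hBc : IsCompact (Prod.fst '' M) := hMcl.isCompact.image continuous_fst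
  have hBinv : MapsTo f (Prod.fst '' M) (Prod.fst '' M) := by
    rintro _ ⟨p, hp, rfl⟩
    exact ⟨F p, hMinv hp, hsemi p⟩
  have hBmin := subset_closure_orbit_image_of_semiconj continuous_fst hsemi hMmin
  have : CompactSpace (Prod.fst '' M) := isCompact_iff_compactSpace.1 hBc
  have : Nonempty (Prod.fst '' M) := (hMne.image _).to_subtype
  obtain ⟨S, hSc, hSne, hS⟩ := TopologicalSpace.exists_countable_basis I
  have := hSc.to_subtype
  have hsubM : ∀ (n : ℕ) (U : Set I), U.Nonempty → collapsedBase F M n U ⊆ Prod.fst '' M :=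
    fun n U ⟨y, hy⟩ b hb => ⟨(b, y), (hb y hy).1, rfl⟩
  have hSn : ∀ U : S, IsOpen (U : Set I) ∧ (U : Set I).Nonempty := fun U =>
    ⟨hS.isOpen U.2, nonempty_iff_ne_empty.2 fun h => hSne (h ▸ U.2)⟩
  by_contra! h
  obtain ⟨⟨n, U⟩, x, hx⟩ := nonempty_interior_of_iUnion_of_closed
    (f := fun i : ℕ × S =>
      (Subtype.val ⁻¹' (f^[i.1] '' collapsedBase F M i.1 i.2) : Set (Prod.fst '' M)))
    (fun i => (((isClosed_collapsedBase hF hMcl i.1 i.2).isCompact.image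
      (hf.iterate i.1)).isClosed.preimage continuous_subtype_val))
    (by
      refine eq_univ_of_forall fun b => ?_
      obtain ⟨n, U, hU, ⟨y, hy⟩, c, hc, hcb⟩ := h b b.2
      obtain ⟨U', hU'S, -, hU'U⟩ := hS.exists_subset_of_mem_open hy hU
      exact mem_iUnion.2 ⟨(n, ⟨U', hU'S⟩), c, fun z hz => ⟨(hc z (hU'U hz)).1,
        fun z' hz' => (hc z (hU'U hz)).2 z' (hU'U hz')⟩, hcb⟩)
  obtain ⟨O, hO, hOeq⟩ := isOpen_induced_iff.1 (isOpen_interior (s := (Subtype.val ⁻¹'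
    (f^[n] '' collapsedBase F M n U) : Set (Prod.fst '' M))))
  obtain ⟨V, hV, hVne, hVK⟩ := exists_open_inter_subset_of_subset_iterate_image hf hBc hBinv
    hBmin n (isClosed_collapsedBase hF hMcl n U) (hsubM n U (hSn U).2) hO
    ⟨x, hOeq.symm.subset hx, x.2⟩
    (fun y hy => by
      have hmem := interior_subset (hOeq.subset (show (⟨y, hy.2⟩ : Prod.fst '' M) ∈ _ from hy.1))
      exact hmem)
  exact not_open_inter_subset_collapsedBase hF hMcl hMinv hMmin n (hSn U).1 (hSn U).2 hV hVne hVK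

end Triangular

/-- A minimal set `M` of a continuous triangular map of the unit square
is nowhere dense (equivalently, since `M` is closed, has empty interior) in the
subspace `pr₁(M) × I` of `I × I`. -/
theorem minimal_set_of_triangular_map_nowhere_dense_in_proj_cylinder
    (f : I → I) (g : I × I → I) (hf : Continuous f) (hg : Continuous g)
    (F : I × I → I × I) (hF : ∀ p, F p = (f p.1, g p))
    (M : Set (I × I)) (hMne : M.Nonempty) (hMcl : IsClosed M)
    (hMinv : Set.MapsTo F M M)
    (hMmin : ∀ p ∈ M, M ⊆ closure (Set.range fun n => F^[n] p)) :
    interior {q : ↥((Prod.fst '' M) ×ˢ (Set.univ : Set I)) | (q : I × I) ∈ M} = ∅ := by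
  have hFc : Continuous F := by
    rw [funext hF]
    fun_prop
  have hsemi : Function.Semiconj Prod.fst F f := fun p => by rw [hF]
  by_contra hne
  obtain ⟨⟨⟨b₀, y₀⟩, hq₀⟩, hq⟩ := nonempty_iff_ne_empty.2 hne
  obtain ⟨O, hO, hOeq⟩ := isOpen_induced_iff.1 (isOpen_interior
    (s := {q : ↥((Prod.fst '' M) ×ˢ (Set.univ : Set I)) | (q : I × I) ∈ M}))
  obtain ⟨V, J, hV, hJ, hbV, hyJ, hVJ⟩ := isOpen_prod_iff.1 hO b₀ y₀ (hOeq.symm.subset hq)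
  obtain ⟨p, q, hpq, hpqJ⟩ := hJ.exists_Ioo_subset ⟨y₀, hyJ⟩
  have hVM : ∀ b ∈ V ∩ Prod.fst '' M, ∀ y ∈ Ioo p q, (b, y) ∈ M := fun b hb y hy => by
    have hmem := interior_subset (hOeq.subset (show (⟨(b, y), hb.2, mem_univ y⟩ :
      ↥((Prod.fst '' M) ×ˢ (Set.univ : Set I))) ∈ _ from hVJ ⟨hb.1, hpqJ hy⟩))
    exact hmem
  obtain ⟨b, hbM, hb⟩ := exists_forall_notMem_image_collapsedBase hf hFc hsemi hMne hMcl
    hMinv hMmin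
  obtain ⟨m, hm, hmax⟩ := (hMcl.preimage
    (by fun_prop : Continuous fun y : I => (b, y))).isCompact.exists_isMaxOn
    (by obtain ⟨⟨_, y⟩, hy, rfl⟩ := hbM; exact ⟨y, hy⟩) continuousOn_id
  obtain ⟨y₁, hy₁⟩ := nonempty_Ioo.2 hpq
  obtain ⟨n, ⟨c, s⟩, ⟨⟨hcV, hs⟩, hcM⟩, hcs⟩ := exists_mem_open_iterate_eq hFc hMcl.isCompact
    hMinv hMmin (hV.prod (isOpen_Ioo (a := p) (b := q)))
    ⟨(b₀, y₁), ⟨hbV, hy₁⟩, hVM b₀ ⟨hbV, hq₀.1⟩ y₁ hy₁⟩ hm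
  have hcB : c ∈ V ∩ Prod.fst '' M := ⟨hcV, (c, s), hcM, rfl⟩
  have hfst : ∀ z, (F^[n] (c, z)).1 = f^[n] c := fun z => (hsemi.iterate_right n) (c, z)
  have hcb : f^[n] c = b := by rw [← hfst s, hcs]
  have hle : ∀ y ∈ Ioo p q, (F^[n] (c, y)).2 ≤ (F^[n] (c, s)).2 := fun y hy => by
    rw [hcs]
    refine hmax (show (b, (F^[n] (c, y)).2) ∈ M from ?_)
    rw [← hcb, ← hfst y]
    exact hMinv.iterate n (hVM c hcB y hy)
  have hexists : ∀ u v, u < v → Ioo u v ⊆ Ioo p q →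
      ∃ y ∈ Ioo u v, (F^[n] (c, y)).2 < (F^[n] (c, s)).2 := fun u v huv hsub => by
    by_contra! hcon
    have heq : ∀ y ∈ Ioo u v, F^[n] (c, y) = F^[n] (c, s) := fun y hy =>
      Prod.ext ((hfst y).trans (hfst s).symm) ((hle y (hsub hy)).antisymm (hcon y hy))
    exact hb n (Ioo u v) isOpen_Ioo (nonempty_Ioo.2 huv)
      ⟨c, fun y hy => ⟨hVM c hcB y (hsub hy), fun y' hy' => (heq y hy).trans (heq y' hy').symm⟩,
        hcb⟩
  obtain ⟨l, hl, hls⟩ := hexists p s hs.1 (Ioo_subset_Ioo_right hs.2.le)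
  obtain ⟨r, hr, hrs⟩ := hexists s q hs.2 (Ioo_subset_Ioo_left hs.1.le)
  exact not_fold_of_minimal hFc hsemi hMcl hMinv hMmin n hV hVM hcB hl.1 hl.2 hr.1 hr.2 hls hrs
end

section
/- Let B be a nonempty compact metric space, f : B → B a continuous minimal map, and F : B × [0,1] → B × [0,1] a continuous map of the form F(b, y) = (f(b), g(b, y)) with g : B × [0,1] → [0,1] continuous. Then every minimal set of F is nowhere dense in B × [0,1]. -/
open Set Topology unitInterval

open Filter

/-- A backward orbit inside a compact minimal set is dense in it. -/
theorem subset_closure_range_of_backward_orbit {X : Type*} [TopologicalSpace X]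
    {F : X → X} (hF : Continuous F) {M : Set X} (hM : IsCompact M)
    (hmin : ∀ p ∈ M, M ⊆ closure (range fun n => F^[n] p))
    {x : ℕ → X} (hxM : ∀ n, x n ∈ M) (hx : ∀ n, F (x (n + 1)) = x n) :
    M ⊆ closure (range x) := by
  obtain ⟨z, hzM, hz⟩ := hM.exists_mapClusterPt (f := atTop) (u := x)
    (tendsto_principal.2 (Eventually.of_forall hxM))
  have hiter : ∀ k n, F^[k] (x (n + k)) = x n := by
    intro k
    induction k with
    | zero => intro n; rfl
    | succ k ih => intro n; rw [Function.iterate_succ_apply, ← add_assoc, hx, ih]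
  refine (hmin z hzM).trans (closure_minimal ?_ isClosed_closure)
  rintro _ ⟨k, rfl⟩
  have hk : MapClusterPt (F^[k] z) atTop (F^[k] ∘ x) :=
    hz.continuousAt_comp (hF.iterate k).continuousAt
  rw [mem_closure_iff_nhds]
  intro s hs
  obtain ⟨n, hn, hkn⟩ := ((hk.frequently hs).and_eventually (eventually_ge_atTop k)).exists
  refine ⟨_, hn, n - k, ?_⟩
  rw [Function.comp_apply, ← hiter k (n - k), Nat.sub_add_cancel hkn]

/-- A nonempty closed subset of a compact minimal set which is covered by its own image is
the whole minimal set. -/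
theorem minimal_subset_of_subset_image {X : Type*} [TopologicalSpace X]
    {F : X → X} (hF : Continuous F) {M : Set X} (hM : IsCompact M)
    (hmin : ∀ p ∈ M, M ⊆ closure (range fun n => F^[n] p))
    {A : Set X} (hA : IsClosed A) (hAM : A ⊆ M) (hAne : A.Nonempty) (hAF : A ⊆ F '' A) :
    M ⊆ A := by
  choose φ hφA hφ using hAF
  obtain ⟨a, ha⟩ := hAne
  let y : ℕ → A := fun n => (fun p : A => (⟨φ p.2, hφA p.2⟩ : A))^[n] ⟨a, ha⟩
  have hy : ∀ n, F (y (n + 1)) = y n := by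
    intro n
    simp only [y, Function.iterate_succ_apply']
    exact hφ _
  refine (subset_closure_range_of_backward_orbit hF hM hmin (x := fun n => (y n : X))
    (fun n => hAM (y n).2) hy).trans (closure_minimal ?_ hA)
  rintro _ ⟨n, rfl⟩
  exact (y n).2

/-- The restriction of a continuous map to a compact minimal set is surjective. -/
theorem minimal_subset_image {X : Type*} [TopologicalSpace X] [T2Space X]
    {F : X → X} (hF : Continuous F) {M : Set X} (hM : IsCompact M) (hinv : MapsTo F M M)
    (hmin : ∀ p ∈ M, M ⊆ closure (range fun n => F^[n] p)) :
    M ⊆ F '' M := by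
  intro p hp
  have hmaps : MapsTo F (F '' M) (F '' M) := by
    rintro _ ⟨q, hq, rfl⟩
    exact mem_image_of_mem F (hinv hq)
  refine closure_minimal ?_ (hM.image hF).isClosed (hmin _ (hinv hp) hp)
  rintro _ ⟨n, rfl⟩
  exact hmaps.iterate n (mem_image_of_mem F hp)

/-- Along a minimal map, a generic property holds at all preimages of a generic point. -/
theorem eventually_residual_forall_preimage {B : Type*} [TopologicalSpace B] [T2Space B]
    [CompactSpace B] {f : B → B} (hf : Continuous f)
    (hmin : ∀ b : B, Dense (range fun n => f^[n] b)) {P : B → Prop}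
    (hP : ∀ᶠ a in residual B, P a) : ∀ᶠ b in residual B, ∀ a, f a = b → P a := by
  have hmin' : ∀ p ∈ (univ : Set B), univ ⊆ closure (range fun n => f^[n] p) :=
    fun p _ => (hmin p).closure_eq.ge
  have hsurj := minimal_subset_image hf isCompact_univ (mapsTo_univ _ _) hmin'
  obtain ⟨S, hSo, hSd, hSc, hS⟩ := mem_residual_iff.1 hP
  have key : ∀ t ∈ S, ∀ᶠ b in residual B, ∀ a, f a = b → a ∈ t := by
    intro t ht
    have heq : {b | ∀ a, f a = b → a ∈ t} = (f '' tᶜ)ᶜ := by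
      ext b
      simp only [mem_ofPred_eq, mem_compl_iff, mem_image, not_exists, not_and]
      exact forall_congr' fun a => by tauto
    change {b | ∀ a, f a = b → a ∈ t} ∈ residual B
    rw [heq]
    refine residual_of_dense_open
      ((hSo t ht).isClosed_compl.isCompact.image hf).isClosed.isOpen_compl ?_
    rw [← interior_eq_empty_iff_dense_compl, ← not_nonempty_iff_eq_empty]
    rintro ⟨v, hv⟩
    set V := interior (f '' tᶜ)
    have hVo : IsOpen (f ⁻¹' V) := isOpen_interior.preimage hf
    obtain ⟨u, -, hu⟩ := hsurj (mem_univ v)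
    have hcover : univ ⊆ f '' (tᶜ ∪ (f ⁻¹' V)ᶜ) := by
      intro b _
      by_cases hb : b ∈ V
      · exact image_mono subset_union_left (interior_subset hb)
      · obtain ⟨c, -, rfl⟩ := hsurj (mem_univ b)
        exact ⟨c, Or.inr hb, rfl⟩
    have hall := minimal_subset_of_subset_image hf isCompact_univ hmin'
      ((hSo t ht).isClosed_compl.union hVo.isClosed_compl) (subset_univ _)
      (by
        obtain ⟨c, hc, -⟩ := hcover (mem_univ v)
        exact ⟨c, hc⟩)
      ((subset_univ _).trans hcover)
    obtain ⟨w, hwV, hwt⟩ := (hSd t ht).inter_open_nonempty _ hVo ⟨u, by simpa [hu] using hv⟩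
    rcases hall (mem_univ w) with h | h
    exacts [h hwt, h hwV]
  filter_upwards [(eventually_countable_ball hSc).2 key] with b hb a ha
  exact hS (mem_sInter.2 fun t ht => hb t ht a ha)

/-- Generically, fibre intervals of a minimal set carry no interior peak over three given
heights. -/
theorem isNowhereDense_setOf_peak {B : Type*} [TopologicalSpace B] [T2Space B] [CompactSpace B]
    {F : B × I → B × I} (hF : Continuous F) {M : Set (B × I)} (hMcl : IsClosed M)
    (hinv : MapsTo F M M) (hmin : ∀ p ∈ M, M ⊆ closure (range fun n => F^[n] p))
    {h : B × I → ℝ} (hh : Continuous h)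
    (hFh : ∀ a z z', h (a, z) = h (a, z') → F (a, z) = F (a, z'))
    {x y z : I} (hxy : x < y) (hyz : y < z) :
    IsNowhereDense {a | (∀ t ∈ Icc x z, (a, t) ∈ M) ∧
      h (a, x) < h (a, y) ∧ h (a, z) < h (a, y)} := by
  set C : Set B := {a | ∀ t ∈ Icc x z, (a, t) ∈ M}
  set N : Set B := {a | h (a, x) < h (a, y) ∧ h (a, z) < h (a, y)}
  have hC : IsClosed C := by
    have : C = ⋂ t ∈ Icc x z, (fun a => (a, t)) ⁻¹' M := by
      ext a; simp [C]
    rw [this]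
    exact isClosed_biInter fun t _ => hMcl.preimage (by fun_prop)
  have hN : IsOpen N := by
    refine IsOpen.and (isOpen_lt ?_ ?_) (isOpen_lt ?_ ?_) <;> fun_prop
  change interior (closure (C ∩ N)) = ∅
  rw [← not_nonempty_iff_eq_empty]
  rintro ⟨a₀, ha₀⟩
  set V := interior (closure (C ∩ N)) ∩ N
  have hVC : V ⊆ C := fun a ha =>
    closure_minimal inter_subset_left hC (interior_subset ha.1)
  have hVo : IsOpen V := isOpen_interior.inter hN
  obtain ⟨a, haV⟩ : V.Nonempty := by
    obtain ⟨a, ha, ha'⟩ := mem_closure_iff.1 (interior_subset ha₀) _ isOpen_interior ha₀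
    exact ⟨a, ha, ha'.2⟩
  set W : Set (B × I) := {p | p.1 ∈ V ∧ (x < p.2 ∧ p.2 < y) ∧
    h (p.1, z) < h p ∧ h p < h (p.1, y)}
  have hWo : IsOpen W := by
    refine (hVo.preimage continuous_fst).and (((isOpen_lt ?_ ?_).and (isOpen_lt ?_ ?_)).and
      ((isOpen_lt ?_ ?_).and (isOpen_lt ?_ ?_))) <;> fun_prop
  have hWM : W ⊆ M := fun p hp =>
    hVC hp.1 p.2 ⟨hp.2.1.1.le, (hp.2.1.2.trans hyz).le⟩
  obtain ⟨w, hw⟩ : W.Nonempty := by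
    obtain ⟨c, hc, hcy⟩ := exists_between (max_lt haV.2.1 haV.2.2)
    obtain ⟨t, ht, rfl⟩ := intermediate_value_Ioo hxy.le
      (f := fun t => h (a, t)) (by fun_prop) ⟨(le_max_left _ _).trans_lt hc, hcy⟩
    exact ⟨(a, t), haV, ht, (le_max_right _ _).trans_lt hc, hcy⟩
  have hcover : M ⊆ F '' (M \ W) := by
    intro p hp
    obtain ⟨q, hq, rfl⟩ := minimal_subset_image hF hMcl.isCompact hinv hmin hp
    by_cases hqW : q ∈ W
    · obtain ⟨t, ht, htq⟩ := intermediate_value_Icc' hyz.le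
        (f := fun t => h (q.1, t)) (by fun_prop) ⟨hqW.2.2.1.le, hqW.2.2.2.le⟩
      exact ⟨(q.1, t), ⟨hVC hqW.1 t ⟨(hxy.trans_le ht.1).le, ht.2⟩,
        fun hW => hW.2.1.2.not_ge ht.1⟩, hFh _ _ _ htq⟩
    · exact ⟨q, ⟨hq, hqW⟩, rfl⟩
  have hall := minimal_subset_of_subset_image hF hMcl.isCompact hmin
    (hMcl.sdiff hWo) sdiff_subset
    (by
      obtain ⟨c, hc, -⟩ := hcover (hWM hw)
      exact ⟨c, hc⟩) (sdiff_subset.trans hcover)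
  exact (hall (hWM hw)).2 hw

/-- Three points witnessing a peak of a continuous function can be moved into a dense set. -/
theorem exists_peak_mem_dense {D : Set I} (hD : Dense D) {u : I → ℝ} (hu : Continuous u)
    {x y z : I} (hxy : x < y) (hyz : y < z) (h1 : u x < u y) (h2 : u z < u y) :
    ∃ x' ∈ D, ∃ y' ∈ D, ∃ z' ∈ D, x ≤ x' ∧ x' < y' ∧ y' < z' ∧ z' ≤ z ∧
      u x' < u y' ∧ u z' < u y' := by
  obtain ⟨y', ⟨⟨hy1, hy2⟩, hy3, hy4⟩, hyD⟩ := hD.inter_open_nonempty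
    (Ioo x z ∩ ({t | u x < u t} ∩ {t | u z < u t}))
    (isOpen_Ioo.inter ((isOpen_lt (by fun_prop) (by fun_prop)).inter
      (isOpen_lt (by fun_prop) (by fun_prop)))) ⟨y, ⟨hxy, hyz⟩, h1, h2⟩
  have hlt : IsOpen {t | u t < u y'} := isOpen_lt (by fun_prop) (by fun_prop)
  obtain ⟨x', ⟨hx1, hx2⟩, hxD⟩ := hD.inter_open_nonempty (Ioo x y' ∩ {t | u t < u y'})
    (isOpen_Ioo.inter hlt) (by
      have : (𝓝[>] x).NeBot := nhdsGT_neBot_of_exists_gt ⟨_, hy1⟩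
      exact Filter.nonempty_of_mem
        (inter_mem (Ioo_mem_nhdsGT hy1) (mem_nhdsWithin_of_mem_nhds (hlt.mem_nhds hy3))))
  obtain ⟨z', ⟨hz1, hz2⟩, hzD⟩ := hD.inter_open_nonempty (Ioo y' z ∩ {t | u t < u y'})
    (isOpen_Ioo.inter hlt) (by
      have : (𝓝[<] z).NeBot := nhdsLT_neBot_of_exists_lt ⟨_, hy2⟩
      exact Filter.nonempty_of_mem
        (inter_mem (Ioo_mem_nhdsLT hy2) (mem_nhdsWithin_of_mem_nhds (hlt.mem_nhds hy4))))
  exact ⟨x', hxD, y', hyD, z', hzD, hx1.1.le, hx1.2, hz1.1, hz1.2.le, hx2, hz2⟩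

/-- Generically, fibre intervals of a minimal set carry no interior peak. -/
theorem eventually_residual_no_peak {B : Type*} [TopologicalSpace B] [T2Space B]
    [CompactSpace B]
    {F : B × I → B × I} (hF : Continuous F) {M : Set (B × I)} (hMcl : IsClosed M)
    (hinv : MapsTo F M M) (hmin : ∀ p ∈ M, M ⊆ closure (range fun n => F^[n] p))
    {h : B × I → ℝ} (hh : Continuous h)
    (hFh : ∀ a z z', h (a, z) = h (a, z') → F (a, z) = F (a, z')) :
    ∀ᶠ a in residual B, ∀ x y z : I, x < y → y < z → (∀ t ∈ Icc x z, (a, t) ∈ M) →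
      h (a, x) < h (a, y) → ¬ h (a, z) < h (a, y) := by
  obtain ⟨D, hDc, hD⟩ := TopologicalSpace.exists_countable_dense I
  have key : ∀ x ∈ D, ∀ y ∈ D, ∀ z ∈ D, ∀ᶠ a in residual B, x < y → y < z →
      ¬ ((∀ t ∈ Icc x z, (a, t) ∈ M) ∧ h (a, x) < h (a, y) ∧ h (a, z) < h (a, y)) := by
    intro x _ y _ z _
    by_cases hxyz : x < y ∧ y < z
    · have hnd := isNowhereDense_setOf_peak hF hMcl hinv hmin hh hFh hxyz.1 hxyz.2
      filter_upwards [residual_of_dense_open isClosed_closure.isOpen_compl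
        (interior_eq_empty_iff_dense_compl.1 hnd)] with a ha _ _ hbad
      exact ha (subset_closure hbad)
    · exact Eventually.of_forall fun a h1 h2 => absurd ⟨h1, h2⟩ hxyz
  have key' : ∀ᶠ a in residual B, ∀ x ∈ D, ∀ y ∈ D, ∀ z ∈ D, x < y → y < z →
      ¬ ((∀ t ∈ Icc x z, (a, t) ∈ M) ∧ h (a, x) < h (a, y) ∧ h (a, z) < h (a, y)) := by
    refine (eventually_countable_ball hDc).2 fun x hx => ?_
    refine (eventually_countable_ball hDc).2 fun y hy => ?_
    exact (eventually_countable_ball hDc).2 fun z hz => key x hx y hy z hz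
  filter_upwards [key'] with a ha x y z hxy hyz hM h1 h2
  obtain ⟨x', hx', y', hy', z', hz', hxx, hxy', hyz', hzz, h1', h2'⟩ :=
    exists_peak_mem_dense hD (u := fun t => h (a, t)) (by fun_prop) hxy hyz h1 h2
  exact ha x' hx' y' hy' z' hz' hxy' hyz'
    ⟨fun t ht => hM t ⟨hxx.trans ht.1, ht.2.trans hzz⟩, h1', h2'⟩

/-- The points of `S` which do not lie strictly inside an interval contained in `S`. -/
def intervalEnds {α : Type*} [Preorder α] (S : Set α) : Set α :=
  {t ∈ S | ∀ r s, r < t → t < s → ¬ Icc r s ⊆ S}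

/-- A point of a closed set which lies strictly inside an interval of the set has an interval
end below it, joined to it inside the set. -/
theorem exists_lower_intervalEnd {α : Type*} [CompleteLinearOrder α] [TopologicalSpace α]
    [OrderTopology α] {S : Set α} (hS : IsClosed S) {x r : α} (hrx : r < x) (hr : Icc r x ⊆ S) :
    ∃ p ∈ intervalEnds S, p < x ∧ Icc p x ⊆ S := by
  set T : Set α := {y | y ≤ x ∧ Icc y x ⊆ S}
  have hrT : r ∈ T := ⟨hrx.le, hr⟩
  have hle : sInf T ≤ r := sInf_le hrT
  have hTS : T ⊆ S := fun y hy => hy.2 ⟨le_rfl, hy.1⟩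
  have hpS : sInf T ∈ S := closure_minimal hTS hS (csInf_mem_closure ⟨r, hrT⟩ (OrderBot.bddBelow T))
  have hIcc : Icc (sInf T) x ⊆ S := by
    intro t ht
    rcases ht.1.eq_or_lt with h | h
    · exact h ▸ hpS
    · obtain ⟨y, hy, hyt⟩ := sInf_lt_iff.1 h
      exact hy.2 ⟨hyt.le, ht.2⟩
  refine ⟨sInf T, ⟨hpS, fun a b ha hb hab => ?_⟩, hle.trans_lt hrx, hIcc⟩
  refine ha.not_ge (sInf_le ⟨(ha.trans_le (hle.trans hrx.le)).le, fun t ht => ?_⟩)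
  rcases le_total t (sInf T) with h | h
  · exact hab ⟨ht.1, h.trans hb.le⟩
  · exact hIcc ⟨h, ht.2⟩

theorem exists_upper_intervalEnd {α : Type*} [CompleteLinearOrder α] [TopologicalSpace α]
    [OrderTopology α] {S : Set α} (hS : IsClosed S) {x r : α} (hrx : x < r) (hr : Icc x r ⊆ S) :
    ∃ q ∈ intervalEnds S, x < q ∧ Icc x q ⊆ S := by
  obtain ⟨q, ⟨hq, hq'⟩, hxq, hI⟩ := exists_lower_intervalEnd (α := αᵒᵈ) (S := S) hS
    (x := x) (r := r) hrx (fun t ht => hr ⟨ht.2, ht.1⟩)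
  exact ⟨q, ⟨hq, fun a b ha hb hab => hq' b a hb ha fun t ht => hab ⟨ht.2, ht.1⟩⟩, hxq,
    fun t ht => hI ⟨ht.2, ht.1⟩⟩

/-- If `u : S → S'` is continuous and monotone or antitone on every interval in `S`, then every
interval end of `S'` in the image of `u` is the image of an interval end of `S`. -/
theorem exists_intervalEnd_preimage {u : I → I} (hu : Continuous u) {S S' : Set I}
    (hS : IsClosed S) (hmaps : MapsTo u S S')
    (hmono : ∀ p q, Icc p q ⊆ S → MonotoneOn u (Icc p q) ∨ AntitoneOn u (Icc p q))
    {x : I} (hx : x ∈ S) (hux : u x ∈ intervalEnds S') :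
    ∃ e ∈ intervalEnds S, u e = u x := by
  by_cases hxE : x ∈ intervalEnds S
  · exact ⟨x, hxE, rfl⟩
  obtain ⟨r, s, hrx, hxs, hrs⟩ : ∃ r s, r < x ∧ x < s ∧ Icc r s ⊆ S := by
    by_contra! hcon
    exact hxE ⟨hx, hcon⟩
  obtain ⟨p, hpE, hpx, hp⟩ := exists_lower_intervalEnd hS hrx
    ((Icc_subset_Icc_right hxs.le).trans hrs)
  obtain ⟨q, hqE, hxq, hq⟩ := exists_upper_intervalEnd hS hxs
    ((Icc_subset_Icc_left hrx.le).trans hrs)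
  have hpq : Icc p q ⊆ S := by
    rw [← Icc_union_Icc_eq_Icc hpx.le hxq.le]
    exact union_subset hp hq
  have hpq' : p ≤ q := (hpx.trans hxq).le
  by_contra! hne
  have hup := hne p hpE
  have huq := hne q hqE
  rcases hmono p q hpq with hm | hm
  · have h1 : u p ≤ u x := hm ⟨le_rfl, hpq'⟩ ⟨hpx.le, hxq.le⟩ hpx.le
    have h2 : u x ≤ u q := hm ⟨hpx.le, hxq.le⟩ ⟨hpq', le_rfl⟩ hxq.le
    refine hux.2 _ _ (h1.lt_of_ne hup) (h2.lt_of_ne huq.symm) ?_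
    exact (intermediate_value_Icc hpq' hu.continuousOn).trans
      (image_subset_iff.2 fun t ht => hmaps (hpq ht))
  · have h1 : u x ≤ u p := hm ⟨le_rfl, hpq'⟩ ⟨hpx.le, hxq.le⟩ hpx.le
    have h2 : u q ≤ u x := hm ⟨hpx.le, hxq.le⟩ ⟨hpq', le_rfl⟩ hxq.le
    refine hux.2 _ _ (h2.lt_of_ne huq) (h1.lt_of_ne hup.symm) ?_
    exact (intermediate_value_Icc' hpq' hu.continuousOn).trans
      (image_subset_iff.2 fun t ht => hmaps (hpq ht))

/-- A minimal set with interior contains an open box avoiding all interval ends of fibres. -/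
theorem exists_open_disjoint_intervalEnds {B : Type*} [TopologicalSpace B] {M : Set (B × I)}
    (hM : (interior M).Nonempty) :
    ∃ O : Set (B × I), IsOpen O ∧ O.Nonempty ∧ O ⊆ M ∧
      ∀ b, ∀ t ∈ intervalEnds {t | (b, t) ∈ M}, (b, t) ∉ O := by
  obtain ⟨⟨b, t⟩, hbt⟩ := hM
  have hslice : ∀ c : B, IsOpen {t | (c, t) ∈ interior M} := fun c =>
    isOpen_interior.preimage (by fun_prop)
  have hd : Dense (Ioo (0 : I) 1) := by
    rw [dense_iff_closure_eq, closure_Ioo zero_ne_one]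
    exact eq_univ_of_forall fun t => ⟨t.2.1, t.2.2⟩
  obtain ⟨s, hs, hs'⟩ := hd.inter_open_nonempty _ (hslice b) ⟨t, hbt⟩
  refine ⟨interior M ∩ Prod.snd ⁻¹' Ioo 0 1,
    isOpen_interior.inter (isOpen_Ioo.preimage continuous_snd), ⟨(b, s), hs, hs'⟩,
    inter_subset_left.trans interior_subset, ?_⟩
  rintro c e he ⟨hce, he0, he1⟩
  have hnhds := (hslice c).mem_nhds hce
  obtain ⟨r, hr, hrs⟩ := exists_Ioc_subset_of_mem_nhds hnhds ⟨0, he0⟩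
  obtain ⟨r', hr', hrs'⟩ := exists_Ico_subset_of_mem_nhds hnhds ⟨1, he1⟩
  obtain ⟨v, hv, hve⟩ := exists_between hr
  obtain ⟨v', hev, hv'⟩ := exists_between hr'
  refine he.2 v v' hve hev fun w hw => ?_
  rcases le_total w e with h | h
  · exact interior_subset (s := M) (hrs ⟨hv.trans_le hw.1, h⟩)
  · exact interior_subset (s := M) (hrs' ⟨h, hw.2.trans_lt hv'⟩)

/-- Every minimal set of a fibre-preserving (skew product) continuous map
of `B × [0,1]` over a minimal base is nowhere dense in `B × [0,1]`. -/
theorem minimal_set_of_skew_product_on_interval_nowhere_dense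
    {B : Type*} [MetricSpace B] [CompactSpace B] [Nonempty B]
    (f : B → B) (hf : Continuous f)
    (hfmin : ∀ b : B, Dense (Set.range fun n => f^[n] b))
    (g : B × I → I) (hg : Continuous g)
    (F : B × I → B × I) (hF : ∀ p, F p = (f p.1, g p))
    (M : Set (B × I)) (hMne : M.Nonempty) (hMcl : IsClosed M)
    (hMinv : Set.MapsTo F M M)
    (hMmin : ∀ p ∈ M, M ⊆ closure (Set.range fun n => F^[n] p)) :
    IsNowhereDense M := by
  have hFc : Continuous F := by
    rw [funext hF]
    fun_prop
  rw [hMcl.isNowhereDense_iff, ← not_nonempty_iff_eq_empty]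
  intro hint
  obtain ⟨O, hOo, ⟨o, ho⟩, hOM, hO⟩ := exists_open_disjoint_intervalEnds hint
  let P : B → Prop := fun a => ∀ p q : I, Icc p q ⊆ {t | (a, t) ∈ M} →
    MonotoneOn (fun t => g (a, t)) (Icc p q) ∨ AntitoneOn (fun t => g (a, t)) (Icc p q)
  have hP : ∀ᶠ a in residual B, P a := by
    filter_upwards [eventually_residual_no_peak hFc hMcl hMinv hMmin
        (h := fun p => (g p : ℝ)) (by fun_prop)
        (fun a z z' h => by simp only [hF, Subtype.ext h]),
      eventually_residual_no_peak hFc hMcl hMinv hMmin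
        (h := fun p => -(g p : ℝ)) (by fun_prop)
        (fun a z z' h => by simp only [hF, Subtype.ext (neg_injective h)])] with a h1 h2 p q hpq
    by_contra! hcon
    obtain ⟨x, hx, y, hy, z, hz, hxy, hyz, h⟩ :=
      not_monotoneOn_not_antitoneOn_iff_exists_lt_lt.1 hcon
    have hxz : ∀ t ∈ Icc x z, (a, t) ∈ M := fun t ht => hpq ⟨hx.1.trans ht.1, ht.2.trans hz.2⟩
    rcases h with h | h
    · exact h1 x y z hxy hyz hxz h.1 h.2
    · exact h2 x y z hxy hyz hxz (neg_lt_neg h.1) (neg_lt_neg h.2)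
  have hPn : ∀ n, ∀ᶠ b in residual B, ∀ a, f^[n] a = b → P a := by
    intro n
    induction n with
    | zero => simpa using hP
    | succ n ih =>
      filter_upwards [eventually_residual_forall_preimage hf hfmin ih] with b hb a ha
      exact hb (f^[n] a) (by rw [← ha, Function.iterate_succ_apply']) a rfl
  obtain ⟨b, hb⟩ := (dense_of_mem_residual (eventually_countable_forall.2 hPn)).nonempty
  have hfib : ∀ a : B, IsClosed {t | (a, t) ∈ M} := fun a => hMcl.preimage (by fun_prop)
  set E : Set (B × I) :=
    {p | p ∈ M ∧ p.2 ∈ intervalEnds {t | (p.1, t) ∈ M} ∧ ∃ n, f^[n] p.1 = b}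
  have hEM : E ⊆ M := fun p hp => hp.1
  have hEne : E.Nonempty := by
    obtain ⟨m, hm⟩ := hMne
    have hproj : MapsTo f (Prod.fst '' M) (Prod.fst '' M) := by
      rintro _ ⟨p, hp, rfl⟩
      exact ⟨F p, hMinv hp, by rw [hF]⟩
    have hbproj : b ∈ Prod.fst '' M := by
      refine closure_minimal ?_ (hMcl.isCompact.image continuous_fst).isClosed (hfmin m.1 b)
      rintro _ ⟨n, rfl⟩
      exact hproj.iterate n (mem_image_of_mem _ hm)
    obtain ⟨⟨b', t⟩, ht, rfl⟩ := hbproj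
    obtain ⟨e, he, hemax⟩ := (hfib b').isCompact.exists_isGreatest ⟨t, ht⟩
    exact ⟨(b', e), he, ⟨he, fun r s hr hs hrs =>
      hs.not_ge (hemax (hrs ⟨(hr.trans hs).le, le_rfl⟩))⟩, 0, rfl⟩
  have hEF : E ⊆ F '' E := by
    rintro ⟨c, e⟩ ⟨hM, hend, n, hn⟩
    obtain ⟨⟨a, x⟩, hax, hFax⟩ := minimal_subset_image hFc hMcl.isCompact hMinv hMmin hM
    rw [hF, Prod.mk.injEq] at hFax
    obtain ⟨rfl, rfl⟩ := hFax
    have hn' : f^[n + 1] a = b := hn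
    obtain ⟨e', he', hge'⟩ := exists_intervalEnd_preimage (u := fun t => g (a, t))
      (S' := {t | (f a, t) ∈ M}) (by fun_prop) (hfib a)
      (fun t ht => mem_ofPred_eq ▸ hF (a, t) ▸ hMinv ht) (hb (n + 1) a hn') hax hend
    exact ⟨(a, e'), ⟨he'.1, he', n + 1, hn'⟩, by rw [hF, hge']⟩
  have hclosure : closure E ⊆ F '' closure E :=
    closure_minimal (hEF.trans (image_mono subset_closure))
      (isClosed_closure.isCompact.image hFc).isClosed
  have hdense := minimal_subset_of_subset_image hFc hMcl.isCompact hMmin isClosed_closure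
    (closure_minimal hEM hMcl) hEne.closure hclosure
  obtain ⟨p, hpO, hpE⟩ := mem_closure_iff.1 (hdense (hOM ho)) O hOo ho
  exact hO p.1 p.2 hpE.2.1 hpO
end

section
/- There exist a Cantor set C ⊆ ℝ (a nonempty compact perfect totally disconnected subset of the real line) and a continuous minimal map f : C → C such that exactly one point of C has two f-preimages in C and every other point of C has exactly one f-preimage in C. -/
open Set Topology

open Filter

namespace DoubledOdometer

section Transfer

variable {X : Type*} [TopologicalSpace X]

/-- An aperiodic minimal map has no isolated points. -/
theorem exists_ne_mem_of_minimal {F : X → X}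
    (hmin : ∀ x, Dense (range fun n => F^[n] x)) (hper : ∀ x n, F^[n + 1] x ≠ x)
    (x : X) {U : Set X} (hU : IsOpen U) (hx : x ∈ U) : ∃ y ∈ U, y ≠ x := by
  obtain ⟨_, hy, n, rfl⟩ := (hmin (F x)).inter_open_nonempty U hU ⟨x, hx⟩
  exact ⟨_, hy, hper x n⟩

/-- An aperiodic minimal map with exactly one doubled point, on a compact space which injects
continuously into the Cantor space, can be realised on a Cantor set of reals. -/
theorem exists_cantor_real_of_minimal [Nonempty X] [CompactSpace X] {φ : X → ℕ → Bool}
    (hφ : Continuous φ) (hφi : Function.Injective φ) {F : X → X} (hF : Continuous F)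
    (hmin : ∀ x, Dense (range fun n => F^[n] x)) (hper : ∀ x n, F^[n + 1] x ≠ x)
    {p q₁ q₂ : X} (hq : q₁ ≠ q₂) (h₁ : F q₁ = p) (h₂ : F q₂ = p)
    (hp : ∀ y, F y = p → y = q₁ ∨ y = q₂) (huniq : ∀ x, x ≠ p → ∃! y, F y = x) :
    ∃ C : Set ℝ, C.Nonempty ∧ IsCompact C ∧ Perfect C ∧ IsTotallyDisconnected C ∧
      ∃ f : ↥C → ↥C, Continuous f ∧
        (∀ x : ↥C, Dense (Set.range fun n => f^[n] x)) ∧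
        ∃ p : ↥C,
          (∃ y₁ y₂ : ↥C, y₁ ≠ y₂ ∧ f y₁ = p ∧ f y₂ = p ∧
            ∀ y : ↥C, f y = p → y = y₁ ∨ y = y₂) ∧
          ∀ x : ↥C, x ≠ p → ∃! y : ↥C, f y = x := by
  have hφe : IsEmbedding φ := (hφ.isClosedEmbedding hφi).isEmbedding
  let e : X → ℝ := fun x => (cantorSetHomeomorphNatToBool.symm (φ x) : ℝ)
  have he : IsEmbedding e :=
    IsEmbedding.subtypeVal.comp (cantorSetHomeomorphNatToBool.symm.isEmbedding.comp hφe)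
  have hX : TotallyDisconnectedSpace X :=
    ⟨hφe.isTotallyDisconnected (isTotallyDisconnected_of_totallyDisconnectedSpace _)⟩
  have hC : IsCompact (range e) := isCompact_range he.continuous
  let h : X ≃ₜ range e := he.toHomeomorph
  have hiter : ∀ n x, (fun y => h (F (h.symm y)))^[n] x = h (F^[n] (h.symm x)) := by
    intro n x
    induction n with
    | zero => simp
    | succ n ih => simp [Function.iterate_succ_apply', ih]
  refine ⟨range e, range_nonempty e, hC, ⟨hC.isClosed, ?_⟩,
    he.isTotallyDisconnected_range.2 hX, fun y => h (F (h.symm y)),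
    h.continuous.comp (hF.comp h.symm.continuous), ?_, h p, ⟨h q₁, h q₂, ?_⟩, ?_⟩
  · rintro _ ⟨x, rfl⟩
    rw [accPt_iff_nhds]
    intro U hU
    obtain ⟨V, hVU, hV, hxV⟩ := mem_nhds_iff.1 hU
    obtain ⟨y, hy, hyx⟩ :=
      exists_ne_mem_of_minimal hmin hper x (hV.preimage he.continuous) hxV
    exact ⟨e y, ⟨hVU hy, mem_range_self y⟩, he.injective.ne hyx⟩
  · intro x
    have := h.surjective.denseRange.dense_image h.continuous (hmin (h.symm x))
    rw [← range_comp] at this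
    simpa only [hiter, Function.comp_def] using this
  · refine ⟨h.injective.ne hq, by simp [h₁], by simp [h₂], fun y hy => ?_⟩
    rw [← h.symm_apply_eq, ← h.symm_apply_eq]
    exact hp _ (h.injective hy)
  · intro x hx
    obtain ⟨y, hy, hy'⟩ := huniq (h.symm x) (by rwa [Ne, h.symm_apply_eq])
    refine ⟨h y, by simp [hy], fun z hz => ?_⟩
    rw [← h.symm_apply_eq]
    exact hy' _ (by rw [← hz, h.symm_apply_apply])

end Transfer

/-- The 2-adic integers inject continuously into a countable power of `Bool`. -/
theorem exists_continuous_injective_padicInt :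
    ∃ ψ : ℤ_[2] → ℕ × ℕ → Bool, Continuous ψ ∧ Function.Injective ψ := by
  classical
  refine ⟨fun z a => decide (z ∈ Metric.ball (a.1 : ℤ_[2]) (1 / (a.2 + 1))), ?_, ?_⟩
  · refine continuous_pi fun a => ?_
    rw [continuous_bool_rng true]
    simpa [preimage, Metric.ball] using IsUltrametricDist.isClopen_ball (a.1 : ℤ_[2]) (1 / ((a.2 : ℝ) + 1))
  · intro z w hzw
    by_contra hne
    obtain ⟨k, hk⟩ := exists_nat_one_div_lt (half_pos (dist_pos.2 hne))
    obtain ⟨n, hn⟩ := PadicInt.denseRange_natCast.exists_dist_lt z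
      (Nat.one_div_pos_of_nat (α := ℝ) (n := k))
    have := congrFun hzw (n, k)
    simp only [Metric.mem_ball, hn, decide_eq_decide, true_iff] at this
    have h3 := dist_triangle_right z w (n : ℤ_[2])
    linarith

/-- The parity of the 2-adic valuation. -/
noncomputable def parity (z : ℤ_[2]) : Bool := decide (Even z.valuation)

theorem eventually_parity_eq {z : ℤ_[2]} (hz : z ≠ 0) : ∀ᶠ w in 𝓝 z, parity w = parity z := by
  filter_upwards [Metric.ball_mem_nhds z (norm_pos_iff.2 hz)] with w hw
  have hn : ‖w‖ = ‖z‖ := by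
    rw [← norm_neg z]
    apply PadicInt.norm_eq_of_norm_add_lt_right
    rwa [← sub_eq_add_neg, norm_neg, ← mem_ball_iff_norm]
  have hw0 : w ≠ 0 := by
    rw [← norm_pos_iff, hn]
    exact norm_pos_iff.2 hz
  rw [PadicInt.norm_eq_zpow_neg_valuation hz, PadicInt.norm_eq_zpow_neg_valuation hw0] at hn
  have := zpow_right_injective₀ (by norm_num) (by norm_num) hn
  have h4 : w.valuation = z.valuation := by simpa using this
  rw [parity, parity, h4]

theorem tendsto_parity {z : ℤ_[2]} (hz : z ≠ 0) : Tendsto parity (𝓝 z) (𝓝 (parity z)) :=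
  tendsto_nhds_of_eventually_eq (eventually_parity_eq hz)

/-- Pairs of a 2-adic integer `z` and a sequence recording the parity of the valuation of `z + n`,
with an arbitrary record when `z + n = 0`. -/
def space : Set (ℤ_[2] × (ℕ → Bool)) :=
  {x | ∀ n : ℕ, x.1 + n ≠ 0 → x.2 n = parity (x.1 + n)}

theorem isClosed_space : IsClosed space := by
  simp only [space, ofPred_forall]
  refine isClosed_iInter fun n => ?_
  rw [← isOpen_compl_iff, isOpen_iff_mem_nhds]
  intro x hx
  simp only [mem_compl_iff, mem_ofPred_eq, Classical.not_imp] at hx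
  have hc : ContinuousAt (fun y : ℤ_[2] × (ℕ → Bool) => y.1 + n) x := by fun_prop
  have hd : ContinuousAt (fun y : ℤ_[2] × (ℕ → Bool) => y.2 n) x := by fun_prop
  filter_upwards [hc.eventually (eventually_parity_eq hx.1), hc.eventually_ne hx.1,
    hd.eventually (show ∀ᶠ b in 𝓝 (x.2 n), b = x.2 n by simp)] with y h1 h2 h3
  simp only [mem_compl_iff, mem_ofPred_eq, Classical.not_imp]
  exact ⟨h2, by rw [h3, h1]; exact hx.2⟩

instance : CompactSpace space := isCompact_iff_compactSpace.1 isClosed_space.isCompact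

/-- Add one to the 2-adic integer and shift the record. -/
noncomputable def step (x : space) : space :=
  ⟨(x.1.1 + 1, fun n => x.1.2 (n + 1)), fun n hn => by
    have h := x.2 (n + 1)
    push_cast at h
    rw [add_comm (n : ℤ_[2]), ← add_assoc] at h
    exact h hn⟩

theorem continuous_step : Continuous step := by
  unfold step
  fun_prop

theorem iterate_step_fst (x : space) (n : ℕ) : (step^[n] x).1.1 = x.1.1 + n := by
  induction n with
  | zero => simp
  | succ n ih => simp [Function.iterate_succ_apply', step, ih, add_assoc]

theorem iterate_step_snd (x : space) (n k : ℕ) : (step^[n] x).1.2 k = x.1.2 (k + n) := by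
  induction n generalizing k with
  | zero => simp
  | succ n ih =>
    rw [Function.iterate_succ_apply']
    exact (ih (k + 1)).trans (by rw [add_right_comm, add_assoc])

theorem iterate_step_ne (x : space) (n : ℕ) : step^[n + 1] x ≠ x := by
  intro h
  have h1 := congrArg (fun y : space => y.1.1) h
  simp only [iterate_step_fst, add_eq_left] at h1
  exact Nat.cast_ne_zero.2 n.succ_ne_zero h1

/-- The record of `z`, with the value of `parity 0` when `z + n = 0`. -/
noncomputable def record (z : ℤ_[2]) : ℕ → Bool := fun n => parity (z + n)

theorem continuousAt_record {z : ℤ_[2]} (hz : ∀ n : ℕ, z + n ≠ 0) : ContinuousAt record z := by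
  rw [ContinuousAt, tendsto_pi_nhds]
  intro n
  exact (tendsto_parity (hz n)).comp (Continuous.tendsto (by fun_prop) z)

theorem snd_eq_record {x : space} (hx : ∀ n : ℕ, x.1.1 + n ≠ 0) : x.1.2 = record x.1.1 :=
  funext fun n => x.2 n (hx n)

theorem exists_forall_add_ne_zero (z : ℤ_[2]) : ∃ m : ℕ, ∀ n : ℕ, z + m + n ≠ 0 := by
  by_cases h : ∃ j : ℕ, z + j = 0
  · obtain ⟨j, hj⟩ := h
    refine ⟨j + 1, fun n hn => ?_⟩
    push_cast at hn
    rw [← add_assoc, hj, zero_add] at hn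
    exact (1 + n).cast_ne_zero (R := ℤ_[2]).2 (by omega) (by exact_mod_cast hn)
  · push Not at h
    exact ⟨0, by simpa using h⟩

/-- The orbit of a point, as a set of pairs. -/
def orbit (x : space) : Set (ℤ_[2] × (ℕ → Bool)) := range fun n => (step^[n] x).1

theorem record_mem_closure_orbit (x : space) {w : ℤ_[2]} (hw : ∀ n : ℕ, w + n ≠ 0) :
    (w, record w) ∈ closure (orbit x) := by
  obtain ⟨m, hm⟩ := exists_forall_add_ne_zero x.1.1
  have hd : DenseRange fun k : ℕ => x.1.1 + m + (k : ℤ_[2]) :=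
    (Homeomorph.addLeft (x.1.1 + m)).surjective.denseRange.comp PadicInt.denseRange_natCast
      (Homeomorph.addLeft (x.1.1 + m)).continuous
  have hc : ContinuousAt (fun z : ℤ_[2] => (z, record z)) w :=
    continuousAt_id.prodMk (continuousAt_record hw)
  refine closure_mono ?_ (mem_closure_image (f := fun z : ℤ_[2] => (z, record z)) hc (hd w))
  rintro _ ⟨_, ⟨k, rfl⟩, rfl⟩
  refine ⟨m + k, ?_⟩
  have h1 : (step^[m + k] x).1.1 = x.1.1 + m + k := by
    rw [iterate_step_fst]; push_cast; ring
  refine Prod.ext h1 ?_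
  rw [snd_eq_record, h1]
  intro n
  rw [h1, add_assoc (x.1.1 + m)]
  exact_mod_cast hm (k + n)

theorem valuation_two_pow (k : ℕ) : PadicInt.valuation ((2 : ℤ_[2]) ^ k) = k := by
  have h := PadicInt.valuation_p_pow_mul (p := 2) k 1 one_ne_zero
  simpa using h

theorem exists_parity_two_pow (b : Bool) :
    ∃ i : ℕ, ∀ k : ℕ, parity (2 ^ (2 * k + i)) = b := by
  cases b
  · exact ⟨1, fun k => by simp only [parity, valuation_two_pow]; simp⟩
  · exact ⟨0, fun k => by simp only [parity, valuation_two_pow]; simp⟩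

theorem mem_closure_orbit (x y : space) : y.1 ∈ closure (orbit x) := by
  by_cases h : ∃ j : ℕ, y.1.1 + j = 0
  · obtain ⟨j, hj⟩ := h
    obtain ⟨i, hi⟩ := exists_parity_two_pow (y.1.2 j)
    let c : ℕ → ℤ_[2] := fun k => y.1.1 + 2 ^ (2 * k + i)
    have hc : Tendsto c atTop (𝓝 y.1.1) := by
      have h2 : ‖(2 : ℤ_[2])‖ < 1 := by
        have := PadicInt.norm_p (p := 2)
        push_cast at this
        rw [this]
        norm_num
      have h3 := (tendsto_pow_atTop_nhds_zero_of_norm_lt_one h2).comp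
        (show Tendsto (fun k => 2 * k + i) atTop atTop from
          tendsto_atTop_mono (fun k => by simp only [id]; omega) tendsto_id)
      simpa using h3.const_add y.1.1
    have hc0 : ∀ᶠ k in atTop, ∀ n : ℕ, c k + n ≠ 0 := by
      filter_upwards [eventually_ge_atTop j] with k hk n hn
      have h4 : ((2 ^ (2 * k + i) + n : ℕ) : ℤ_[2]) = (j : ℕ) := by
        push_cast
        linear_combination hn - hj
      have h5 := Nat.cast_injective h4
      have := Nat.lt_two_pow_self (n := 2 * k + i)
      omega
    have hr : Tendsto (fun k => record (c k)) atTop (𝓝 y.1.2) := by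
      rw [tendsto_pi_nhds]
      intro n
      by_cases hn : y.1.1 + n = 0
      · have hnj : n = j := Nat.cast_injective (R := ℤ_[2]) (by linear_combination hn - hj)
        subst hnj
        have : ∀ k, record (c k) n = y.1.2 n := fun k => by
          rw [← hi k]
          simp only [record, c]
          congr 1
          linear_combination hn
        simp only [this]
        exact tendsto_const_nhds
      · rw [y.2 n hn]
        exact (tendsto_parity hn).comp (hc.add_const _)
    have := isClosed_closure.mem_of_tendsto (hc.prodMk_nhds hr)
      (hc0.mono fun k hk => record_mem_closure_orbit x hk)
    exact this
  · push Not at h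
    have := record_mem_closure_orbit x h
    rwa [← snd_eq_record h] at this

theorem dense_range_iterate_step (x : space) : Dense (range fun n => step^[n] x) := by
  intro y
  rw [closure_subtype, ← range_comp]
  exact mem_closure_orbit x y

theorem exists_continuous_injective_space :
    ∃ φ : space → ℕ → Bool, Continuous φ ∧ Function.Injective φ := by
  obtain ⟨ψ, hψ, hψi⟩ := exists_continuous_injective_padicInt
  let E := Denumerable.eqv (ℕ × ℕ ⊕ ℕ)
  refine ⟨fun x n => Sum.elim (ψ x.1.1) x.1.2 (E.symm n), ?_, ?_⟩
  · refine continuous_pi fun n => ?_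
    rcases E.symm n with a | a
    · exact (continuous_apply a).comp (hψ.comp (continuous_fst.comp continuous_subtype_val))
    · exact (continuous_apply a).comp (continuous_snd.comp continuous_subtype_val)
  · intro x y hxy
    have h : ∀ a, Sum.elim (ψ x.1.1) x.1.2 a = Sum.elim (ψ y.1.1) y.1.2 a := fun a => by
      simpa using congrFun hxy (E a)
    exact Subtype.ext (Prod.ext (hψi (funext fun a => h (.inl a))) (funext fun a => h (.inr a)))

/-- The `step`-preimage of `x` whose record starts with `b`. -/
noncomputable def pred (x : space) (b : Bool) (hb : x.1.1 ≠ 1 → b = parity (x.1.1 - 1)) : space :=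
  ⟨(x.1.1 - 1, fun n => n.casesOn b x.1.2), fun n => by
    cases n with
    | zero => simpa [sub_eq_zero] using hb
    | succ n =>
      have h := x.2 n
      push_cast
      rwa [show x.1.1 - 1 + (n + 1) = x.1.1 + (n : ℤ_[2]) by ring]⟩

theorem step_pred (x : space) (b : Bool) (hb) : step (pred x b hb) = x :=
  Subtype.ext (Prod.ext (sub_add_cancel _ _) rfl)

theorem eq_pred {x y : space} (h : step y = x) (hb) : y = pred x (y.1.2 0) hb := by
  subst h
  refine Subtype.ext (Prod.ext (add_sub_cancel_right _ _).symm (funext fun n => ?_))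
  cases n <;> rfl

theorem record_zero_of_ne {x y : space} (h : step y = x) (hx : x.1.1 ≠ 1) :
    y.1.2 0 = parity (x.1.1 - 1) := by
  subst h
  have h := y.2 0
  simp only [step, add_sub_cancel_right, Nat.cast_zero, add_zero] at h ⊢
  exact h fun h0 => hx (by simp [step, h0])

/-- The doubled point. -/
noncomputable def branch : space := ⟨(1, record 1), fun _ _ => rfl⟩

theorem eq_branch {x : space} (hx : x.1.1 = 1) : x = branch := by
  refine Subtype.ext (Prod.ext hx ((snd_eq_record fun n => ?_).trans (by rw [hx]; rfl)))
  rw [hx]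
  exact_mod_cast (by omega : 1 + n ≠ 0)

end DoubledOdometer

open DoubledOdometer in
/-- There exist a Cantor set `C ⊆ ℝ` (nonempty compact perfect totally
disconnected) and a continuous minimal map `f : C → C` such that exactly one point of `C`
has two `f`-preimages and every other point has exactly one `f`-preimage. -/
theorem exists_cantor_minimal_map_with_one_doubled_point :
    ∃ C : Set ℝ, C.Nonempty ∧ IsCompact C ∧ Perfect C ∧ IsTotallyDisconnected C ∧
      ∃ f : ↥C → ↥C, Continuous f ∧
        (∀ x : ↥C, Dense (Set.range fun n => f^[n] x)) ∧
        ∃ p : ↥C,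
          (∃ y₁ y₂ : ↥C, y₁ ≠ y₂ ∧ f y₁ = p ∧ f y₂ = p ∧
            ∀ y : ↥C, f y = p → y = y₁ ∨ y = y₂) ∧
          ∀ x : ↥C, x ≠ p → ∃! y : ↥C, f y = x := by
  obtain ⟨φ, hφ, hφi⟩ := exists_continuous_injective_space
  have : Nonempty space := ⟨branch⟩
  have hb : ∀ b : Bool, branch.1.1 ≠ 1 → b = parity (branch.1.1 - 1) := fun b h => absurd rfl h
  refine exists_cantor_real_of_minimal hφ hφi continuous_step dense_range_iterate_step
    iterate_step_ne (p := branch) (q₁ := pred branch true (hb _)) (q₂ := pred branch false (hb _))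
    ?_ (step_pred _ _ _) (step_pred _ _ _) ?_ ?_
  · intro h
    exact Bool.noConfusion (congrArg (fun y : space => y.1.2 0) h : true = false)
  · intro y hy
    have h := eq_pred hy (hb _)
    cases hy0 : y.1.2 0
    · exact .inr (by simpa only [hy0] using h)
    · exact .inl (by simpa only [hy0] using h)
  · intro x hx
    have hx1 : x.1.1 ≠ 1 := fun h => hx (eq_branch h)
    refine ⟨pred x _ fun _ => rfl, step_pred _ _ _, fun y hy => ?_⟩
    have h := eq_pred hy fun _ => record_zero_of_ne hy hx1
    simpa only [record_zero_of_ne hy hx1] using h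
end
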